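/- Let X be a measurable space with probability measure μ, let σ ∈ (0,1] and ε ∈ (0, σ], and let B be a finite set of measurable functions b : X → {0,1} with ln|B| ≥ 1 and ∫ b dμ ≤ ε for every b ∈ B. Let (Ω, ℱ, P) be a probability space with a filtration 𝒢_0 ⊆ … ⊆ 𝒢_T and let x_1, …, x_T : Ω → X be random variables such that x_t is 𝒢_t-measurable and, for every b ∈ B and every t, E[b(x_t) ∣ 𝒢_{t−1}] ≤ σ^{-1} ∫ b dμ almost surely. If T ε / σ ≥ √(ln|B|), then E[max_{b ∈ B} Σ_{t=1}^T b(x_t)] ≤ 3 T (ε/σ) √(ln|B|). -/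

import Mathlib

open MeasureTheory

lemma aux_step {Ω : Type*} {m mΩ : MeasurableSpace Ω} (P : Measure Ω) [IsProbabilityMeasure P]
    (hm : m ≤ mΩ) (f g : Ω → ℝ) (hf : StronglyMeasurable[m] f) (hf0 : ∀ ω, 0 ≤ f ω)
    (hfi : Integrable f P) (hg : Integrable g P) (hfg : Integrable (f * g) P) (c : ℝ)
    (h : P[g | m] ≤ᵐ[P] fun _ => c) : ∫ ω, f ω * g ω ∂P ≤ c * ∫ ω, f ω ∂P := by
  have h1 : P[f * g | m] =ᵐ[P] f * P[g | m] := condExp_mul_of_stronglyMeasurable_left hf hfg hg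
  have h2 : ∫ ω, (P[f * g | m]) ω ∂P = ∫ ω, f ω * g ω ∂P := integral_condExp hm
  rw [← h2, ← integral_const_mul]
  refine integral_mono_ae integrable_condExp (hfi.const_mul c) ?_
  filter_upwards [h1, h] with ω h1 h
  rw [h1]
  simp only [Pi.mul_apply]
  rw [mul_comm]
  exact mul_le_mul_of_nonneg_right h (hf0 ω)

lemma aux_mgf {Ω : Type*} {mΩ : MeasurableSpace Ω} (P : Measure Ω) [IsProbabilityMeasure P]
    (T : ℕ) (𝒢 : ℕ → MeasurableSpace Ω)
    (hmono : ∀ i j, i ≤ j → 𝒢 i ≤ 𝒢 j) (hle : ∀ i, 𝒢 i ≤ mΩ)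
    (g : ℕ → Ω → ℝ) (hg : ∀ t ∈ Finset.Icc 1 T, Measurable[𝒢 t] (g t))
    (hv : ∀ t ω, g t ω = 0 ∨ g t ω = 1) (p : ℝ)
    (h : ∀ t ∈ Finset.Icc 1 T, P[g t | 𝒢 (t - 1)] ≤ᵐ[P] fun _ => p) (n : ℕ) (hn : n ≤ T) :
    Measurable[𝒢 n] (fun ω => Real.exp (∑ t ∈ Finset.Icc 1 n, g t ω)) ∧
    Integrable (fun ω => Real.exp (∑ t ∈ Finset.Icc 1 n, g t ω)) P ∧
    ∫ ω, Real.exp (∑ t ∈ Finset.Icc 1 n, g t ω) ∂P ≤ Real.exp (n * ((Real.exp 1 - 1) * p)) := by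
  induction n with
  | zero => simp
  | succ n ih =>
    obtain ⟨im, ii, ib⟩ := ih (by omega)
    have hmem : n + 1 ∈ Finset.Icc 1 T := by simp; omega
    have hgm := hg _ hmem
    have hs := h _ hmem
    simp only [Nat.add_sub_cancel] at hs
    have he : 0 < Real.exp 1 - 1 := by have := Real.add_one_lt_exp (x := 1) (by norm_num); linarith
    have hbd : ∀ᵐ ω ∂P, ‖g (n+1) ω‖ ≤ 1 := by
      refine Filter.Eventually.of_forall fun ω => ?_
      rcases hv (n+1) ω with h | h <;> simp [h]
    have hgm' : Measurable (g (n+1)) := hgm.mono (hle _) le_rfl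
    have hgi : Integrable (g (n+1)) P :=
      Integrable.of_bound hgm'.aestronglyMeasurable 1 hbd
    have hfg : Integrable ((fun ω => Real.exp (∑ t ∈ Finset.Icc 1 n, g t ω)) * g (n+1)) P :=
      ii.mul_bdd (c := 1) hgm'.aestronglyMeasurable hbd
    have key : (fun ω => Real.exp (∑ t ∈ Finset.Icc 1 (n+1), g t ω)) =
        fun ω => Real.exp (∑ t ∈ Finset.Icc 1 n, g t ω) +
          (Real.exp 1 - 1) * (Real.exp (∑ t ∈ Finset.Icc 1 n, g t ω) * g (n+1) ω) := by
      funext ω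
      rw [Finset.sum_Icc_succ_top (by omega), Real.exp_add]
      rcases hv (n+1) ω with h | h <;> rw [h]
      · simp
      · ring
    have im' : Measurable[𝒢 (n+1)] (fun ω => Real.exp (∑ t ∈ Finset.Icc 1 n, g t ω)) :=
      im.mono (hmono n (n+1) (by omega)) le_rfl
    have hfg' := hfg.const_mul (Real.exp 1 - 1)
    simp only [Pi.mul_apply] at hfg'
    have st := aux_step P (hle n) _ (g (n+1)) im.stronglyMeasurable
      (fun ω => (Real.exp_pos _).le) ii hgi hfg p hs
    rw [key]
    refine ⟨im'.add ((im'.mul hgm).const_mul _), ii.add hfg', ?_⟩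
    rw [integral_add ii hfg', integral_const_mul]
    have hpos : 0 ≤ ∫ ω, Real.exp (∑ t ∈ Finset.Icc 1 n, g t ω) ∂P :=
      integral_nonneg fun ω => (Real.exp_pos _).le
    set I := ∫ ω, Real.exp (∑ t ∈ Finset.Icc 1 n, g t ω) ∂P
    calc _ ≤ I + (Real.exp 1 - 1) * (p * I) := by gcongr
      _ = ((Real.exp 1 - 1) * p + 1) * I := by ring
      _ ≤ Real.exp ((Real.exp 1 - 1) * p) * I := by gcongr; exact Real.add_one_le_exp _
      _ ≤ Real.exp ((Real.exp 1 - 1) * p) * Real.exp (n * ((Real.exp 1 - 1) * p)) := by gcongr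
      _ = _ := by rw [← Real.exp_add]; congr 1; push_cast; ring


/-- **Analytic core of Theorem 3 (regret against adaptive σ-smooth adversaries).**
`B` is a finite family (indexed by `ι`) of measurable `{0,1}`-valued functions on `X`, each
of `μ`-mean at most `ε`; `x_1, …, x_T` is an adapted process whose conditional law at each
step is `σ`-smooth with respect to `μ` when tested on `B`. If `T ε / σ ≥ √(ln |B|)` then
`E[max_b Σ_t b(x_t)] ≤ 3 T (ε/σ) √(ln |B|)`. -/
theorem adaptive_smooth_maximal_bound
    {X : Type*} [MeasurableSpace X] (μ : Measure X) [IsProbabilityMeasure μ]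
    (σ ε : ℝ) (hσ0 : 0 < σ) (hσ1 : σ ≤ 1) (hε0 : 0 < ε) (hεσ : ε ≤ σ)
    {ι : Type*} [Fintype ι] [Nonempty ι]
    (b : ι → X → ℝ)
    (hbmeas : ∀ i, Measurable (b i))
    (hbval : ∀ i x, b i x = 0 ∨ b i x = 1)
    (hbmean : ∀ i, ∫ y, b i y ∂μ ≤ ε)
    (hι : 1 ≤ Real.log (Fintype.card ι))
    {Ω : Type*} {mΩ : MeasurableSpace Ω} (P : Measure Ω) [IsProbabilityMeasure P]
    (T : ℕ) (𝒢 : ℕ → MeasurableSpace Ω)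
    (hmono : ∀ i j, i ≤ j → 𝒢 i ≤ 𝒢 j)
    (hle : ∀ i, 𝒢 i ≤ mΩ)
    (x : ℕ → Ω → X)
    (hxmeas : ∀ t ∈ Finset.Icc 1 T, Measurable[𝒢 t] (x t))
    (hsmooth : ∀ i, ∀ t ∈ Finset.Icc 1 T,
      P[fun ω => b i (x t ω) | 𝒢 (t - 1)] ≤ᵐ[P] fun _ => σ⁻¹ * ∫ y, b i y ∂μ)
    (hTεσ : Real.sqrt (Real.log (Fintype.card ι)) ≤ T * ε / σ) :
    ∫ ω, (Finset.univ.sup' Finset.univ_nonempty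
        fun i => ∑ t ∈ Finset.Icc 1 T, b i (x t ω)) ∂P
      ≤ 3 * T * (ε / σ) * Real.sqrt (Real.log (Fintype.card ι)) := by
  classical
  set L := Real.log (Fintype.card ι) with hL
  set p := ε / σ with hp
  have hp0 : 0 < p := div_pos hε0 hσ0
  have hmgf := fun i => aux_mgf P T 𝒢 hmono hle (fun t ω => b i (x t ω))
    (fun t ht => (hbmeas i).comp (hxmeas t ht)) (fun t ω => hbval i _) p
    (fun t ht => by
      filter_upwards [hsmooth i t ht] with ω hω
      refine hω.trans ?_
      rw [hp, div_eq_inv_mul]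
      exact mul_le_mul_of_nonneg_left (hbmean i) (inv_nonneg.2 hσ0.le)) T le_rfl
  set K := L + T * ((Real.exp 1 - 1) * p) with hK
  have hcard : (0:ℝ) < Fintype.card ι := by exact_mod_cast Fintype.card_pos
  have hsumint : Integrable
      (fun ω => ∑ i, Real.exp (∑ t ∈ Finset.Icc 1 T, b i (x t ω))) P :=
    integrable_finsetSum _ fun i _ => (hmgf i).2.1
  have hsum : ∫ ω, ∑ i, Real.exp (∑ t ∈ Finset.Icc 1 T, b i (x t ω)) ∂P ≤ Real.exp K := by
    rw [integral_finsetSum _ fun i _ => (hmgf i).2.1, hK, Real.exp_add, hL, Real.exp_log hcard]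
    refine (Finset.sum_le_sum fun i _ => (hmgf i).2.2).trans ?_
    simp
  have hmain : ∫ ω, (Finset.univ.sup' Finset.univ_nonempty
        fun i => ∑ t ∈ Finset.Icc 1 T, b i (x t ω)) ∂P ≤
      ∫ ω, (Real.exp (-K) * (∑ i, Real.exp (∑ t ∈ Finset.Icc 1 T, b i (x t ω))) + (K - 1)) ∂P := by
    refine integral_mono_of_nonneg (Filter.Eventually.of_forall fun ω => ?_)
      ((hsumint.const_mul _).add (integrable_const _)) (Filter.Eventually.of_forall fun ω => ?_)
    · obtain ⟨i⟩ := ‹Nonempty ι›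
      refine le_trans (Finset.sum_nonneg fun t _ => ?_) (Finset.le_sup'
        (fun i => ∑ t ∈ Finset.Icc 1 T, b i (x t ω)) (Finset.mem_univ i))
      rcases hbval i (x t ω) with h | h <;> simp [h]
    · refine Finset.sup'_le _ _ fun i _ => ?_
      have h1 := Real.add_one_le_exp (-K + ∑ t ∈ Finset.Icc 1 T, b i (x t ω))
      rw [Real.exp_add] at h1
      have h2 : Real.exp (∑ t ∈ Finset.Icc 1 T, b i (x t ω)) ≤
          ∑ i, Real.exp (∑ t ∈ Finset.Icc 1 T, b i (x t ω)) :=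
        Finset.single_le_sum (f := fun i => Real.exp (∑ t ∈ Finset.Icc 1 T, b i (x t ω)))
          (fun i _ => (Real.exp_pos _).le) (Finset.mem_univ i)
      have h3 := mul_le_mul_of_nonneg_left h2 (Real.exp_pos (-K)).le
      linarith
  rw [integral_add (hsumint.const_mul _) (integrable_const _), integral_const_mul] at hmain
  simp only [integral_const, probReal_univ, smul_eq_mul, one_mul] at hmain
  have h4 := mul_le_mul_of_nonneg_left hsum (Real.exp_pos (-K)).le
  rw [← Real.exp_add, neg_add_cancel, Real.exp_zero] at h4
  have h5 : ∫ ω, (Finset.univ.sup' Finset.univ_nonempty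
        fun i => ∑ t ∈ Finset.Icc 1 T, b i (x t ω)) ∂P ≤ K := by linarith
  refine h5.trans ?_
  have hs1 : 1 ≤ Real.sqrt L := Real.one_le_sqrt.2 hι
  have hss : Real.sqrt L * Real.sqrt L = L := Real.mul_self_sqrt (by linarith)
  rw [mul_div_assoc, ← hp] at hTεσ
  have he : Real.exp 1 - 1 ≤ 2 := by have := Real.exp_one_lt_d9; linarith
  have hTp : 0 ≤ T * p := by positivity
  have h6 := mul_le_mul_of_nonneg_right hTεσ (Real.sqrt_nonneg L)
  have h7 := mul_le_mul_of_nonneg_left he hTp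
  have h8 := mul_le_mul_of_nonneg_left hs1 hTp
  rw [hK]
  linarith
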